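/- Theorem (divergence variational symmetries are symmetries of the Euler–Lagrange system): let L be a difference Lagrangian and let Q be a characteristic such that pr v(L) = Div R identically for some p-tuple R of difference functions (a divergence variational symmetry). Then for every component index α, every n ∈ ℤ^p, and every field u : ℤ^p → ℝ^q satisfying E_β(L)(m,u) = 0 for all β and all m ∈ ℤ^p, one has (pr v(E_α(L)))(n,u) = 0; that is, Q generates a symmetry group of the difference Euler–Lagrange system E_α(L) = 0. -/

import Mathlib

open scoped Classical

/-- Multi-indices / lattice points of the lattice `ℤ^p`. -/
abbrev Idx (p : ℕ) : Type := Fin p → ℤ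

/-- Fields `u : ℤ^p → ℝ^q`. -/
abbrev Fld (p q : ℕ) : Type := Idx p → Fin q → ℝ

/-- Difference functions (raw): functions of a lattice point and a field. -/
abbrev DFun (p q : ℕ) : Type := Idx p → Fld p q → ℝ

/-- Replace the value `u^α(m)` of the field `u` by `t`. -/
noncomputable def upd {p q : ℕ} (u : Fld p q) (m : Idx p) (α : Fin q) (t : ℝ) : Fld p q :=
  fun m' β => if m' = m ∧ β = α then t else u m' β

/-- The partial derivative `∂F/∂u_J^α (n,u)`: the derivative of `F(n,u)` with
respect to the value `u^α(n+J)`. -/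
noncomputable def pd {p q : ℕ} (F : DFun p q) (J : Idx p) (α : Fin q) : DFun p q :=
  fun n u => deriv (fun t => F n (upd u (n + J) α t)) (u (n + J) α)

/-- The shift operator `S_K`. -/
def Sh {p q : ℕ} (K : Idx p) (F : DFun p q) : DFun p q := fun n u => F (n + K) u

/-- `F` is a difference function with stencil `S`: `F(n,u)` depends on `u` only
through the finitely many values `u(n+J)`, `J ∈ S`, smoothly in those values. -/
def IsDiffFun {p q : ℕ} (F : DFun p q) (S : Finset (Idx p)) : Prop :=
  ∃ G : Idx p → (({J // J ∈ S} → Fin q → ℝ) → ℝ),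
    (∀ n, ContDiff ℝ (⊤ : ℕ∞) (G n)) ∧ ∀ n u, F n u = G n fun J α => u (n + J.1) α

/-- The prolonged vector field of a characteristic `Q`, acting on a difference
function `F` with stencil `S`:
`(pr v F)(n,u) = Σ_α Σ_{J ∈ S} (S_J Q^α)(n,u) ⬝ ∂F/∂u_J^α(n,u)`. -/
noncomputable def prv {p q : ℕ} (Q : Fin q → DFun p q) (S : Finset (Idx p))
    (F : DFun p q) : DFun p q :=
  fun n u => ∑ α : Fin q, ∑ J ∈ S, Q α (n + J) u * pd F J α n u

/-- The difference divergence of a `p`-tuple of difference functions. -/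
noncomputable def DDiv {p q : ℕ} (P : Fin p → DFun p q) : DFun p q :=
  fun n u => ∑ i : Fin p, (P i (n + Pi.single i (1 : ℤ)) u - P i n u)

/-- The Euler–Lagrange expression `E_α(F)(n,u) = Σ_{J ∈ S} (∂F/∂u_J^α)(n−J,u)`
of a difference function `F` with stencil `S`. -/
noncomputable def EL {p q : ℕ} (S : Finset (Idx p)) (F : DFun p q) (α : Fin q) : DFun p q :=
  fun n u => ∑ J ∈ S, pd F J α (n - J) u

/-- The higher Euler operator
`E_{u_J^α}(L)(n,u) = Σ_{J0 ≥ 0} (∂L/∂u_{J0+J}^α)(n−J0,u)` for a difference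
function `L` depending only on forward values, with stencil `S`
(reindexed by `K = J0 + J`; terms with `K ∉ S` vanish). -/
noncomputable def hEuler {p q : ℕ} (S : Finset (Idx p)) (L : DFun p q) (J : Idx p)
    (α : Fin q) : DFun p q :=
  fun n u => ∑ K ∈ S.filter (fun K => J ≤ K), pd L K α (n - (K - J)) u

/-- `T^i(L)(n,u) = Σ_α Σ_{J ≥ 1_i} (S_{J−1_i} Q^α)(n,u) ⬝ E_{u_J^α}(L)(n−1_i,u)`
(a finite sum: only `J` with `1_i ≤ J ≤ K` for some stencil point `K` contribute). -/
noncomputable def TT {p q : ℕ} (Q : Fin q → DFun p q) (S : Finset (Idx p)) (i : Fin p)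
    (L : DFun p q) : DFun p q :=
  fun n u => ∑ α : Fin q, ∑ J ∈ S.biUnion (fun K => Finset.Icc (Pi.single i (1 : ℤ)) K),
    Q α (n + J - Pi.single i (1 : ℤ)) u * hEuler S L J α (n - Pi.single i (1 : ℤ)) u

/-- Partial derivative with respect to the value `u^β(m)`. -/
noncomputable def DD {p q : ℕ} (m : Idx p) (β : Fin q) (f : Fld p q → ℝ) : Fld p q → ℝ :=
  fun u => deriv (fun t => f (upd u m β t)) (u m β)

/-- Smoothness of functions of fields, tested on smooth families of fields. -/
def CS {p q : ℕ} (f : Fld p q → ℝ) : Prop :=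
  ∀ (E : Type) [NormedAddCommGroup E] [NormedSpace ℝ E] (c : E → Fld p q),
    (∀ m β, ContDiff ℝ (⊤ : ℕ∞) (fun x => c x m β)) →
      ContDiff ℝ (⊤ : ℕ∞) (fun x => f (c x))

theorem CS.of_isDiffFun {p q : ℕ} {F : DFun p q} {S : Finset (Idx p)} (h : IsDiffFun F S)
    (n : Idx p) : CS (F n) := by
  obtain ⟨G, hG, hF⟩ := h
  intro E _ _ c hc
  simp only [hF]
  refine (hG n).comp ?_
  exact contDiff_pi.2 fun J => contDiff_pi.2 fun a => hc _ _

theorem CS.sum {p q : ℕ} {ι : Type} (A : Finset ι) {f : ι → Fld p q → ℝ}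
    (h : ∀ i ∈ A, CS (f i)) : CS (fun u => ∑ i ∈ A, f i u) := by
  intro E _ _ c hc
  exact ContDiff.sum fun i hi => h i hi E c hc

theorem CS.mul {p q : ℕ} {f g : Fld p q → ℝ} (hf : CS f) (hg : CS g) :
    CS (fun u => f u * g u) := by
  intro E _ _ c hc
  exact (hf E c hc).mul (hg E c hc)

theorem CS.sub {p q : ℕ} {f g : Fld p q → ℝ} (hf : CS f) (hg : CS g) :
    CS (fun u => f u - g u) := by
  intro E _ _ c hc
  exact (hf E c hc).sub (hg E c hc)

theorem upd_contDiff {p q : ℕ} {E : Type} [NormedAddCommGroup E] [NormedSpace ℝ E]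
    {c : E → Fld p q} {s : E → ℝ} (m : Idx p) (β : Fin q)
    (hc : ∀ m β, ContDiff ℝ (⊤ : ℕ∞) (fun x => c x m β)) (hs : ContDiff ℝ (⊤ : ℕ∞) s) :
    ∀ m' β', ContDiff ℝ (⊤ : ℕ∞) (fun x => upd (c x) m β (s x) m' β') := by
  intro m' β'
  unfold upd
  by_cases h : m' = m ∧ β' = β
  · simpa [h] using hs
  · simpa only [if_neg h] using hc m' β'

theorem deriv_snd_eq {E : Type} [NormedAddCommGroup E] [NormedSpace ℝ E]
    {g : E × ℝ → ℝ} (hg : ContDiff ℝ (⊤ : ℕ∞) g) (x : E) (s : ℝ) :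
    deriv (fun t => g (x, t)) s = fderiv ℝ g (x, s) (0, 1) := by
  have h1 : HasFDerivAt g (fderiv ℝ g (x, s)) (x, s) :=
    (hg.differentiable (by simp)).differentiableAt.hasFDerivAt
  have h2 : HasDerivAt (fun t : ℝ => (x, t)) ((0 : E), (1 : ℝ)) s :=
    (hasDerivAt_const s x).prodMk (hasDerivAt_id s)
  exact (h1.comp_hasDerivAt s h2).deriv

theorem deriv_fst_eq {g : ℝ × ℝ → ℝ} (x s : ℝ) (hg : DifferentiableAt ℝ g (x, s)) :
    deriv (fun t => g (t, s)) x = fderiv ℝ g (x, s) (1, 0) := by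
  have h2 : HasDerivAt (fun t : ℝ => (t, s)) ((1 : ℝ), (0 : ℝ)) x :=
    (hasDerivAt_id x).prodMk (hasDerivAt_const x s)
  exact (hg.hasFDerivAt.comp_hasDerivAt x h2).deriv

theorem CS.DD {p q : ℕ} {f : Fld p q → ℝ} (hf : CS f) (m : Idx p) (β : Fin q) :
    CS (DD m β f) := by
  intro E _ _ c hc
  have hg : ContDiff ℝ (⊤ : ℕ∞) (fun y : E × ℝ => f (upd (c y.1) m β y.2)) :=
    hf (E × ℝ) (fun y => upd (c y.1) m β y.2)
      (upd_contDiff m β (fun m β => (hc m β).comp contDiff_fst) contDiff_snd)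
  have h : (fun x => _root_.DD m β f (c x)) = fun x =>
      fderiv ℝ (fun y : E × ℝ => f (upd (c y.1) m β y.2)) (x, c x m β) (0, 1) := by
    funext x
    exact deriv_snd_eq hg x (c x m β)
  rw [h]
  have h3 := hg.fderiv_right (m := (⊤ : ℕ∞)) (by simp)
  exact (h3.comp (contDiff_id.prodMk (hc m β))).clm_apply contDiff_const

theorem CS.diff {p q : ℕ} {f : Fld p q → ℝ} (hf : CS f) (u : Fld p q) (m : Idx p) (β : Fin q) :
    Differentiable ℝ (fun t => f (upd u m β t)) :=
  (hf ℝ (fun t => upd u m β t)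
    (upd_contDiff m β (fun _ _ => contDiff_const) contDiff_id)).differentiable (by simp)

theorem upd_self {p q : ℕ} (u : Fld p q) (m : Idx p) (β : Fin q) :
    upd u m β (u m β) = u := by
  funext m' β'
  unfold upd
  split_ifs with h
  · rw [h.1, h.2]
  · rfl

theorem DD_sum {p q : ℕ} {ι : Type} (A : Finset ι) {f : ι → Fld p q → ℝ}
    (h : ∀ i ∈ A, CS (f i)) (m : Idx p) (β : Fin q) (u : Fld p q) :
    DD m β (fun u => ∑ i ∈ A, f i u) u = ∑ i ∈ A, DD m β (f i) u := by
  unfold DD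
  exact deriv_fun_sum fun i hi => ((h i hi).diff u m β).differentiableAt

theorem DD_sub {p q : ℕ} {f g : Fld p q → ℝ} (hf : CS f) (hg : CS g)
    (m : Idx p) (β : Fin q) (u : Fld p q) :
    DD m β (fun u => f u - g u) u = DD m β f u - DD m β g u := by
  unfold DD
  exact deriv_fun_sub (hf.diff u m β).differentiableAt (hg.diff u m β).differentiableAt

theorem DD_mul {p q : ℕ} {f g : Fld p q → ℝ} (hf : CS f) (hg : CS g)
    (m : Idx p) (β : Fin q) (u : Fld p q) :
    DD m β (fun u => f u * g u) u = DD m β f u * g u + f u * DD m β g u := by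
  unfold DD
  have := deriv_fun_mul (hf.diff u m β).differentiableAt (x := u m β)
    (hg.diff u m β).differentiableAt
  simpa only [upd_self] using this

theorem upd_comm {p q : ℕ} (u : Fld p q) (m n : Idx p) (β α : Fin q) (h : ¬ (m = n ∧ β = α))
    (s t : ℝ) : upd (upd u m β t) n α s = upd (upd u n α s) m β t := by
  funext m' β'
  unfold upd
  by_cases h1 : m' = n ∧ β' = α
  · by_cases h2 : m' = m ∧ β' = β
    · exact absurd ⟨h2.1.symm.trans h1.1, h2.2.symm.trans h1.2⟩ h
    · simp only [if_pos h1, if_neg h2]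
  · simp only [if_neg h1]

theorem upd_apply_ne {p q : ℕ} (u : Fld p q) (m n : Idx p) (β α : Fin q)
    (h : ¬ (n = m ∧ α = β)) (t : ℝ) : upd u m β t n α = u n α := by
  unfold upd
  rw [if_neg h]

theorem mixed_symm {g : ℝ × ℝ → ℝ} (hg : ContDiff ℝ (⊤ : ℕ∞) g) (a b : ℝ) :
    deriv (fun t => deriv (fun s => g (t, s)) b) a =
      deriv (fun s => deriv (fun t => g (t, s)) a) b := by
  have hd : Differentiable ℝ g := hg.differentiable (by simp)
  have h3 : ContDiff ℝ (⊤ : ℕ∞) (fderiv ℝ g) := hg.fderiv_right (by simp)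
  have hd3 : Differentiable ℝ (fderiv ℝ g) := h3.differentiable (by simp)
  have e1 : (fun t => deriv (fun s => g (t, s)) b) = fun t => fderiv ℝ g (t, b) (0, 1) := by
    funext t; exact deriv_snd_eq hg t b
  have e2 : (fun s => deriv (fun t => g (t, s)) a) = fun s => fderiv ℝ g (a, s) (1, 0) := by
    funext s; exact deriv_fst_eq a s hd.differentiableAt
  have hv : ∀ v : ℝ × ℝ, ContDiff ℝ (⊤ : ℕ∞) (fun y => fderiv ℝ g y v) :=
    fun v => h3.clm_apply contDiff_const
  have hf : ∀ v w : ℝ × ℝ, fderiv ℝ (fun y => fderiv ℝ g y v) (a, b) w =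
      fderiv ℝ (fderiv ℝ g) (a, b) w v := by
    intro v w
    have := (hd3 (a, b)).hasFDerivAt.clm_apply (hasFDerivAt_const v (a, b))
    rw [this.fderiv]
    simp
  have g1 := deriv_fst_eq (g := fun y => fderiv ℝ g y (0, 1)) a b
    ((hv (0, 1)).differentiable (by simp)).differentiableAt
  have g2 := deriv_snd_eq (hv (1, 0)) a b
  have h2 : minSmoothness ℝ 2 ≤ ((⊤ : ℕ∞) : WithTop ℕ∞) := by
    rw [minSmoothness_of_isRCLikeNormedField]
    exact WithTop.coe_le_coe.2 le_top
  have hs : IsSymmSndFDerivAt ℝ g (a, b) := (hg.contDiffAt).isSymmSndFDerivAt h2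
  rw [e1, e2, g1, g2, hf, hf]
  exact hs.eq _ _

theorem DD_symm {p q : ℕ} {f : Fld p q → ℝ} (hf : CS f) (m n : Idx p) (β α : Fin q)
    (u : Fld p q) : DD m β (DD n α f) u = DD n α (DD m β f) u := by
  by_cases h : m = n ∧ β = α
  · rw [h.1, h.2]
  have h' : ¬ (n = m ∧ α = β) := fun k => h ⟨k.1.symm, k.2.symm⟩
  unfold DD
  have hg : ContDiff ℝ (⊤ : ℕ∞) (fun y : ℝ × ℝ => f (upd (upd u m β y.1) n α y.2)) :=
    hf (ℝ × ℝ) (fun y => upd (upd u m β y.1) n α y.2)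
      (upd_contDiff n α (upd_contDiff m β (fun _ _ => contDiff_const) contDiff_fst)
        contDiff_snd)
  have key := mixed_symm hg (u m β) (u n α)
  simp only [upd_apply_ne u m n β α h', upd_apply_ne u n m α β h]
  rw [key]
  simp only [upd_comm u m n β α h]

theorem DD_eq_zero {p q : ℕ} {F : DFun p q} {S : Finset (Idx p)} (h : IsDiffFun F S)
    (k n : Idx p) (α : Fin q) (hn : ∀ J ∈ S, n ≠ k + J) (u : Fld p q) :
    DD n α (F k) u = 0 := by
  obtain ⟨G, -, hF⟩ := h
  have : ∀ t, F k (upd u n α t) = F k u := by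
    intro t
    rw [hF, hF]
    congr 1
    funext J a
    exact upd_apply_ne _ _ _ _ _ (fun e => hn J.1 J.2 e.1.symm) t
  unfold DD
  simp only [this, deriv_const]

theorem sum_reindex {ι κ : Type} (S : Finset ι) (A : Finset κ) (e : ι → κ)
    (he : Function.Injective e) (hA : ∀ J ∈ S, e J ∈ A) (w : κ → ℝ)
    (hw : ∀ k, (∀ J ∈ S, k ≠ e J) → w k = 0) :
    ∑ k ∈ A, w k = ∑ J ∈ S, w (e J) := by
  rw [← Finset.sum_image (s := S) (g := e) (f := w) (fun a _ b _ h => he h)]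
  refine (Finset.sum_subset ?_ ?_).symm
  · intro x hx
    obtain ⟨J, hJ, rfl⟩ := Finset.mem_image.1 hx
    exact hA J hJ
  · intro x _ hx
    exact hw x fun J hJ e => hx (Finset.mem_image.2 ⟨J, hJ, e.symm⟩)

theorem sum_DD_reindex {p q : ℕ} {F : DFun p q} {S : Finset (Idx p)} (h : IsDiffFun F S)
    (A : Finset (Idx p)) (n c : Idx p) (α : Fin q) (hA : ∀ J ∈ S, n - J - c ∈ A)
    (u : Fld p q) :
    ∑ k ∈ A, DD n α (F (k + c)) u = ∑ J ∈ S, DD n α (F (n - J)) u := by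
  rw [sum_reindex S A (fun J => n - J - c) (fun a b hab => by simpa using hab) hA]
  · refine Finset.sum_congr rfl fun J _ => ?_
    simp
  · intro k hk
    refine DD_eq_zero h _ _ _ (fun J hJ e => hk J hJ ?_) u
    rw [e]; abel

theorem sum_DD_reindex0 {p q : ℕ} {F : DFun p q} {S : Finset (Idx p)} (h : IsDiffFun F S)
    (A : Finset (Idx p)) (n : Idx p) (α : Fin q) (hA : ∀ J ∈ S, n - J ∈ A)
    (u : Fld p q) :
    ∑ k ∈ A, DD n α (F k) u = ∑ J ∈ S, DD n α (F (n - J)) u := by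
  have := sum_DD_reindex h A n 0 α (by simpa using hA) u
  simpa using this

theorem EL_eq {p q : ℕ} {L : DFun p q} {S : Finset (Idx p)} (h : IsDiffFun L S)
    (A : Finset (Idx p)) (n : Idx p) (α : Fin q) (hA : ∀ J ∈ S, n - J ∈ A) :
    EL S L α n = DD n α (fun u => ∑ k ∈ A, L k u) := by
  funext u
  rw [DD_sum A (fun k _ => CS.of_isDiffFun h k), sum_DD_reindex0 h A n α hA]
  unfold EL pd DD
  refine Finset.sum_congr rfl fun J _ => ?_
  rw [sub_add_cancel]

theorem DD_DD_eq_zero {p q : ℕ} {L : DFun p q} {S : Finset (Idx p)} (h : IsDiffFun L S)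
    (k m n : Idx p) (β α : Fin q) (hm : ∀ J ∈ S, m ≠ k + J) (u : Fld p q) :
    DD m β (DD n α (L k)) u = 0 := by
  rw [DD_symm (CS.of_isDiffFun h k)]
  have : DD m β (L k) = fun _ => 0 := by
    funext v; exact DD_eq_zero h k m β hm v
  rw [this]
  simp [DD]

/-- Divergence variational symmetries are symmetries of the
Euler–Lagrange system: let `L` be a difference Lagrangian and `Q` a
characteristic with `pr v(L) = Div R` identically for some `p`-tuple `R` of
difference functions.  Then for every `α`, every `n`, and every field `u`
solving the Euler–Lagrange system `E_β(L) = 0`, one has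
`(pr v(E_α(L)))(n,u) = 0`. -/
theorem stmt_7 {p q : ℕ} (hp : 1 ≤ p) (hq : 1 ≤ q)
    (L : DFun p q) (S : Finset (Idx p)) (hL : IsDiffFun L S)
    (hS : ∀ K ∈ S, (0 : Idx p) ≤ K)
    (Q : Fin q → DFun p q) (SQ : Finset (Idx p)) (hQ : ∀ α, IsDiffFun (Q α) SQ)
    (R : Fin p → DFun p q) (SR : Fin p → Finset (Idx p))
    (hR : ∀ i, IsDiffFun (R i) (SR i))
    (hsym : ∀ (n : Idx p) (u : Fld p q), prv Q S L n u = DDiv R n u) :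
    ∀ (α : Fin q) (n : Idx p) (u : Fld p q),
      (∀ (β : Fin q) (m : Idx p), EL S L β m u = 0) →
      prv Q (S.biUnion fun J => S.image fun K => K - J) (EL S L α) n u = 0 := by
  intro α n u hEL
  set A : Finset (Idx p) :=
    (S.image fun J => n - J) ∪
    (SQ.biUnion fun J => S.image fun K => n - J - K) ∪
    (Finset.univ.biUnion fun i => (SR i).image fun J => n - J) ∪
    (Finset.univ.biUnion fun i => (SR i).image fun J => n - J - (Pi.single i (1 : ℤ) : Idx p)) with hA
  have hA1 : ∀ J ∈ S, n - J ∈ A := fun J hJ => by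
    simp only [hA, Finset.mem_union]
    exact Or.inl (Or.inl (Or.inl (Finset.mem_image_of_mem _ hJ)))
  have hA2 : ∀ J ∈ SQ, ∀ K ∈ S, n - J - K ∈ A := fun J hJ K hK => by
    simp only [hA, Finset.mem_union]
    exact Or.inl (Or.inl (Or.inr (Finset.mem_biUnion.2 ⟨J, hJ, Finset.mem_image_of_mem _ hK⟩)))
  have hA3 : ∀ i, ∀ J ∈ SR i, n - J ∈ A := fun i J hJ => by
    simp only [hA, Finset.mem_union]
    exact Or.inl (Or.inr (Finset.mem_biUnion.2
      ⟨i, Finset.mem_univ _, Finset.mem_image_of_mem _ hJ⟩))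
  have hA4 : ∀ i, ∀ J ∈ SR i, n - J - Pi.single i (1 : ℤ) ∈ A := fun i J hJ => by
    simp only [hA, Finset.mem_union]
    exact Or.inr (Finset.mem_biUnion.2
      ⟨i, Finset.mem_univ _, Finset.mem_image.2 ⟨J, hJ, rfl⟩⟩)
  clear_value A
  have hLs : ∀ k, CS (L k) := fun k => CS.of_isDiffFun hL k
  have hQs : ∀ β k, CS (Q β k) := fun β k => CS.of_isDiffFun (hQ β) k
  have hRs : ∀ i k, CS (R i k) := fun i k => CS.of_isDiffFun (hR i) k
  set LL : Fld p q → ℝ := fun u => ∑ k ∈ A, L k u with hLL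
  have hLLs : CS LL := CS.sum A fun k _ => hLs k
  set M : Finset (Idx p) := A.biUnion fun k => S.image fun J => k + J with hM
  have hMm : ∀ k ∈ A, ∀ J ∈ S, k + J ∈ M := fun k hk J hJ =>
    Finset.mem_biUnion.2 ⟨k, hk, Finset.mem_image_of_mem _ hJ⟩
  clear_value M
  have hE : EL S L α n = DD n α LL := EL_eq hL A n α hA1
  -- step 1
  have s1 : prv Q (S.biUnion fun J => S.image fun K => K - J) (EL S L α) n u =
      ∑ β : Fin q, ∑ m ∈ M, Q β m u * DD m β (DD n α LL) u := by
    unfold prv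
    refine Finset.sum_congr rfl fun β _ => ?_
    rw [sum_reindex (S.biUnion fun J => S.image fun K => K - J) M (fun J => n + J)
      (add_right_injective n)]
    · refine Finset.sum_congr rfl fun J _ => ?_
      rw [← hE]; rfl
    · intro T hT
      obtain ⟨J, hJ, hT⟩ := Finset.mem_biUnion.1 hT
      obtain ⟨K, hK, rfl⟩ := Finset.mem_image.1 hT
      have := hMm _ (hA1 J hJ) K hK
      rwa [show n - J + K = n + (K - J) by abel] at this
    · intro m hm
      have e : DD n α LL = fun u => ∑ J ∈ S, DD n α (L (n - J)) u := by
        funext v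
        rw [hLL, DD_sum A (fun k _ => hLs k), sum_DD_reindex0 hL A n α hA1]
      rw [e, DD_sum S (fun J _ => (hLs _).DD n α), Finset.sum_eq_zero, mul_zero]
      intro J hJ
      refine DD_DD_eq_zero hL _ _ _ _ _ (fun K hK e => hm (K - J) ?_ ?_) u
      · exact Finset.mem_biUnion.2 ⟨J, hJ, Finset.mem_image_of_mem _ hK⟩
      · rw [e]; abel
  -- step 2
  have s2 : ∀ β : Fin q, ∀ m ∈ M, Q β m u * DD m β (DD n α LL) u =
      DD n α (fun v => Q β m v * DD m β LL v) u := by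
    intro β m _
    rw [DD_mul (hQs β m) (hLLs.DD m β), DD_symm hLLs m n β α u]
    have : DD n α (Q β m) u * DD m β LL u = 0 := by
      by_cases h : ∀ J ∈ SQ, n ≠ m + J
      · rw [DD_eq_zero (hQ β) m n α h, zero_mul]
      · push Not at h
        obtain ⟨J, hJ, e⟩ := h
        have em : m = n - J := by rw [e]; abel
        have := EL_eq hL A m β (by rw [em]; exact hA2 J hJ)
        rw [hLL, ← this, hEL, mul_zero]
    rw [this, zero_add]
  have s3 : (fun v => ∑ β : Fin q, ∑ m ∈ M, Q β m v * DD m β LL v) =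
      fun v => ∑ i : Fin p, ((∑ k ∈ A, R i (k + (Pi.single i (1 : ℤ) : Idx p)) v) - ∑ k ∈ A, R i k v) := by
    funext v
    have : ∀ k ∈ A, prv Q S L k v = ∑ β : Fin q, ∑ m ∈ M, Q β m v * DD m β (L k) v := by
      intro k hk
      unfold prv
      refine Finset.sum_congr rfl fun β _ => ?_
      rw [sum_reindex S M (fun J => k + J) (add_right_injective k) (hMm k hk)]
      · rfl
      · intro m hm
        rw [DD_eq_zero hL k m β hm, mul_zero]
    calc _ = ∑ k ∈ A, ∑ β : Fin q, ∑ m ∈ M, Q β m v * DD m β (L k) v := by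
            rw [Finset.sum_comm (s := A)]
            refine Finset.sum_congr rfl fun β _ => ?_
            rw [Finset.sum_comm (s := A)]
            refine Finset.sum_congr rfl fun m _ => ?_
            rw [hLL, DD_sum A (fun k _ => hLs k), Finset.mul_sum]
      _ = ∑ k ∈ A, DDiv R k v := by
            refine Finset.sum_congr rfl fun k hk => ?_
            rw [← this k hk, hsym]
      _ = _ := by
            unfold DDiv
            rw [Finset.sum_comm]
            refine Finset.sum_congr rfl fun i _ => ?_
            rw [Finset.sum_sub_distrib]
  rw [s1, Finset.sum_congr rfl fun β _ => Finset.sum_congr rfl (s2 β)]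
  have s4 : DD n α (fun v => ∑ β : Fin q, ∑ m ∈ M, Q β m v * DD m β LL v) u =
      ∑ β : Fin q, ∑ m ∈ M, DD n α (fun v => Q β m v * DD m β LL v) u := by
    rw [DD_sum Finset.univ (f := fun β v => ∑ m ∈ M, Q β m v * DD m β LL v)
      (fun β _ => CS.sum M fun m _ => (hQs β m).mul (hLLs.DD m β))]
    refine Finset.sum_congr rfl fun β _ => ?_
    rw [DD_sum M (f := fun m v => Q β m v * DD m β LL v)
      (fun m _ => (hQs β m).mul (hLLs.DD m β))]
  rw [← s4, s3, DD_sum Finset.univ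
    (f := fun i v => (∑ k ∈ A, R i (k + (Pi.single i (1 : ℤ) : Idx p)) v) - ∑ k ∈ A, R i k v)
    (fun i _ => (CS.sum A fun k _ => hRs i _).sub (CS.sum A fun k _ => hRs i k))]
  refine Finset.sum_eq_zero fun i _ => ?_
  rw [DD_sub (CS.sum A fun k _ => hRs i _) (CS.sum A fun k _ => hRs i k),
    DD_sum A (f := fun k v => R i (k + (Pi.single i (1 : ℤ) : Idx p)) v) (fun k _ => hRs i _),
    DD_sum A (fun k _ => hRs i k),
    sum_DD_reindex (hR i) A n _ α (hA4 i), sum_DD_reindex0 (hR i) A n α (hA3 i), sub_self]
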